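/- arXiv:1808.04166 — 2 statements merged into one kernel-verified Lean document; each statement's English description precedes it below -/
import Mathlib

section
/- Let n, m, r be positive integers with r ≥ 2, and let H be an r-uniform multi-hypergraph with n vertices and m edges. Let X_H be the number of vertices with nonzero in-degree after a random orientation of the edges of H. Then H(X_H) ≤ (1/2)·log₂(n) + (1/2)·log₂(πe). -/
open Finset

/-- Shannon entropy (base 2) of a random variable `X` defined on a finite sample space
with probability mass function `p`:  `H(X) = -∑_s P[X = s] log₂ P[X = s]`. -/
noncomputable def shannonEntropy {Ω S : Type*} [Fintype Ω] [DecidableEq S]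
    (p : Ω → ℝ) (X : Ω → S) : ℝ :=
  -∑ s ∈ Finset.univ.image X,
      (∑ ω ∈ Finset.univ.filter (fun ω => X ω = s), p ω) *
        Real.logb 2 (∑ ω ∈ Finset.univ.filter (fun ω => X ω = s), p ω)

/-!
Adding an independent uniform variable on `[-1/2, 1/2]` to an integer-valued variable of variance
`σ²` gives a density of variance `σ² + 1/12` with the same entropy, whence the Gaussian bound
`H ≤ (1/2) log₂ (2πe (σ² + 1/12))`. In discrete form this is Gibbs' inequality against the
geometric means of a Gaussian density over unit intervals; by Jensen's inequality their sum is at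
most `1`. The events that two different vertices are missed are negatively correlated: for each
edge `1 - a - b ≤ (1 - a) (1 - b)`, and edges are independent. Hence the variance of the number of
hit vertices is at most `n/4`, a contribution of at most `1/4` per vertex, and `2 (n/4 + 1/12) ≤ n`.
-/

open MeasureTheory ProbabilityTheory Function
open scoped NNReal

section Entropy

variable {Ω S : Type*} [Fintype Ω] [DecidableEq S]

lemma shannonEntropy_comp_of_injective {T : Type*} [DecidableEq T] (p : Ω → ℝ) (X : Ω → S)
    {g : S → T} (hg : Injective g) :
    shannonEntropy p (g ∘ X) = shannonEntropy p X := by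
  simp only [shannonEntropy, ← image_image, sum_image hg.injOn, comp_apply, hg.eq_iff]

lemma mul_log_sub_mul_log_le_sub {a b : ℝ} (ha : 0 ≤ a) (hb : 0 < b) :
    a * Real.log b - a * Real.log a ≤ b - a := by
  rcases ha.eq_or_lt with rfl | ha
  · simpa using hb.le
  · calc a * Real.log b - a * Real.log a = a * Real.log (b / a) := by
          rw [Real.log_div hb.ne' ha.ne', mul_sub]
      _ ≤ a * (b / a - 1) := by gcongr; exact Real.log_le_sub_one_of_pos (by positivity)
      _ = b - a := by field_simp

lemma shannonEntropy_le_crossEntropy {p : Ω → ℝ} (hp : ∀ ω, 0 ≤ p ω) (X : Ω → S) {q : S → ℝ}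
    (hq : ∀ s, 0 < q s) (hqp : ∑ s ∈ univ.image X, q s ≤ ∑ ω, p ω) :
    shannonEntropy p X ≤ -∑ ω, p ω * Real.logb 2 (q (X ω)) := by
  set P : S → ℝ := fun s ↦ ∑ ω with X ω = s, p ω
  have hmaps : ∀ ω ∈ (univ : Finset Ω), X ω ∈ univ.image X := fun ω ↦ mem_image_of_mem X
  have sum_P : ∑ s ∈ univ.image X, P s = ∑ ω, p ω := sum_fiberwise_of_maps_to hmaps p
  have sum_log_q : ∑ ω, p ω * Real.log (q (X ω)) = ∑ s ∈ univ.image X, P s * Real.log (q s) := by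
    rw [← sum_fiberwise_of_maps_to hmaps]
    refine sum_congr rfl fun s _ ↦ ?_
    rw [sum_mul]
    exact sum_congr rfl fun ω hω ↦ by rw [(mem_filter.mp hω).2]
  have gibbs : ∑ ω, p ω * Real.log (q (X ω)) ≤ ∑ s ∈ univ.image X, P s * Real.log (P s) := by
    have := sum_le_sum fun s (_ : s ∈ univ.image X) ↦
      mul_log_sub_mul_log_le_sub (sum_nonneg fun ω _ ↦ hp ω : 0 ≤ P s) (hq s)
    rw [sum_sub_distrib, sum_sub_distrib] at this
    linarith
  simp only [shannonEntropy, Real.logb, ← mul_div_assoc, ← sum_div]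
  exact neg_le_neg (div_le_div_of_nonneg_right gibbs (Real.log_nonneg one_le_two))

end Entropy

section Gaussian

/-- The half-open unit interval centred at the integer `k`; these intervals tile the real line. -/
def unitCell (k : ℤ) : Set ℝ := Set.Ioc (-(1 / 2) + k) (-(1 / 2) + k + 1)

lemma pairwise_disjoint_unitCell : Pairwise (Disjoint on unitCell) :=
  Set.pairwise_disjoint_Ioc_add_intCast _

lemma measurableSet_unitCell (k : ℤ) : MeasurableSet (unitCell k) := measurableSet_Ioc

instance isProbabilityMeasure_restrict_unitCell (k : ℤ) :
    IsProbabilityMeasure (volume.restrict (unitCell k)) :=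
  ⟨by simp [unitCell]⟩

lemma integrableOn_unitCell {f : ℝ → ℝ} (hf : Continuous f) (k : ℤ) :
    IntegrableOn f (unitCell k) :=
  hf.integrableOn_Ioc

lemma setIntegral_unitCell_sub_sq (k : ℤ) (c : ℝ) :
    ∫ x in unitCell k, (x - c) ^ 2 = (k - c) ^ 2 + 1 / 12 := by
  rw [unitCell, ← intervalIntegral.integral_of_le (by linarith),
    intervalIntegral.integral_comp_sub_right (fun x ↦ x ^ 2), integral_pow]
  ring

/-- The geometric mean over the unit cell around `k` of the Gaussian density with mean `c` and
variance `v`. As a reference weight for Gibbs' inequality on `ℤ` it has an explicit logarithm. -/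
noncomputable def gaussianWeight (c : ℝ) (v : ℝ≥0) (k : ℤ) : ℝ :=
  Real.exp (∫ x in unitCell k, Real.log (gaussianPDFReal c v x))

lemma log_gaussianPDFReal (c : ℝ) {v : ℝ≥0} (hv : v ≠ 0) (x : ℝ) :
    Real.log (gaussianPDFReal c v x) =
      -(1 / 2) * Real.log (2 * Real.pi * v) - (x - c) ^ 2 / (2 * v) := by
  have two_pi_v_pos : 0 < 2 * Real.pi * v := by positivity
  rw [gaussianPDFReal, Real.log_mul (by positivity) (Real.exp_pos _).ne', Real.log_exp,
    Real.log_inv, Real.log_sqrt two_pi_v_pos.le]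
  ring

lemma log_gaussianWeight (c : ℝ) {v : ℝ≥0} (hv : v ≠ 0) (k : ℤ) :
    Real.log (gaussianWeight c v k) =
      -(1 / 2) * Real.log (2 * Real.pi * v) - ((k - c) ^ 2 + 1 / 12) / (2 * v) := by
  simp only [gaussianWeight, Real.log_exp, log_gaussianPDFReal c hv]
  rw [integral_sub (integrable_const _) (integrableOn_unitCell (by fun_prop) k),
    integral_const, integral_div, setIntegral_unitCell_sub_sq]
  simp

lemma gaussianWeight_le_gaussianReal (c : ℝ) {v : ℝ≥0} (hv : v ≠ 0) (k : ℤ) :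
    gaussianWeight c v k ≤ (gaussianReal c v).real (unitCell k) := by
  have exp_log_pdf : ∀ x, Real.exp (Real.log (gaussianPDFReal c v x)) = gaussianPDFReal c v x :=
    fun x ↦ Real.exp_log (gaussianPDFReal_pos c v x hv)
  have integrable_log_pdf :
      IntegrableOn (fun x ↦ Real.log (gaussianPDFReal c v x)) (unitCell k) := by
    simp only [log_gaussianPDFReal c hv]
    exact integrableOn_unitCell (by fun_prop) k
  calc gaussianWeight c v k
      ≤ ∫ x in unitCell k, Real.exp (Real.log (gaussianPDFReal c v x)) := by
        refine convexOn_exp.map_integral_le Real.continuous_exp.continuousOn isClosed_univ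
          (by simp) integrable_log_pdf ?_
        simpa only [comp_def, exp_log_pdf] using (integrable_gaussianPDFReal c v).restrict
    _ = (gaussianReal c v).real (unitCell k) := by
        simp only [exp_log_pdf, measureReal_def, gaussianReal_apply_eq_integral c hv]
        rw [ENNReal.toReal_ofReal (integral_nonneg (gaussianPDFReal_nonneg c v))]

lemma sum_gaussianWeight_le_one (c : ℝ) {v : ℝ≥0} (hv : v ≠ 0) (s : Finset ℤ) :
    ∑ k ∈ s, gaussianWeight c v k ≤ 1 :=
  calc ∑ k ∈ s, gaussianWeight c v k
      ≤ ∑ k ∈ s, (gaussianReal c v).real (unitCell k) :=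
        sum_le_sum fun k _ ↦ gaussianWeight_le_gaussianReal c hv k
    _ ≤ (gaussianReal c v).real Set.univ :=
        sum_measureReal_le_measureReal_univ (fun k _ ↦ measurableSet_unitCell k)
          (pairwise_disjoint_unitCell.set_pairwise _)
    _ = 1 := probReal_univ

theorem shannonEntropy_le_half_logb_variance {Ω : Type*} [Fintype Ω] [MeasurableSpace Ω]
    [MeasurableSingletonClass Ω] (μ : Measure Ω) [IsProbabilityMeasure μ] (X : Ω → ℤ) :
    shannonEntropy (fun ω ↦ μ.real {ω}) X ≤
      1 / 2 * Real.logb 2 (2 * Real.pi * Real.exp 1 * (Var[fun ω ↦ (X ω : ℝ); μ] + 1 / 12)) := by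
  set c : ℝ := μ[fun ω ↦ (X ω : ℝ)]
  set σ2 : ℝ := Var[fun ω ↦ (X ω : ℝ); μ]
  have hσ2 : 0 ≤ σ2 := variance_nonneg _ _
  let v : ℝ≥0 := ⟨σ2 + 1 / 12, by positivity⟩
  have hv : v ≠ 0 := ne_of_gt (show 0 < σ2 + 1 / 12 by positivity)
  have sum_eq_integral (g : Ω → ℝ) : ∑ ω, μ.real {ω} * g ω = ∫ ω, g ω ∂μ := by
    simp [integral_fintype .of_finite]
  have mean_log_weight : ∫ ω, Real.log (gaussianWeight c v (X ω)) ∂μ =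
      -(1 / 2) * Real.log (2 * Real.pi * Real.exp 1 * v) := by
    have second_moment : ∫ ω, ((X ω : ℝ) - c) ^ 2 ∂μ = σ2 :=
      (variance_eq_integral (measurable_of_finite _).aemeasurable).symm
    have exponent : (σ2 + 1 / 12) / (2 * v) = (1 / 2 : ℝ) := by
      change (σ2 + 1 / 12) / (2 * (σ2 + 1 / 12)) = 1 / 2
      field_simp
    have log_split : Real.log (2 * Real.pi * Real.exp 1 * v) = Real.log (2 * Real.pi * v) + 1 := by
      rw [mul_right_comm, Real.log_mul (by positivity) (Real.exp_pos 1).ne', Real.log_exp]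
    simp only [log_gaussianWeight c hv]
    rw [integral_sub .of_finite .of_finite, integral_div, integral_add .of_finite .of_finite,
      second_moment]
    simp only [integral_const, probReal_univ, one_smul]
    rw [exponent, log_split]
    ring
  calc shannonEntropy (fun ω ↦ μ.real {ω}) X
      ≤ -∑ ω, μ.real {ω} * Real.logb 2 (gaussianWeight c v (X ω)) := by
        refine shannonEntropy_le_crossEntropy (fun _ ↦ measureReal_nonneg) X
          (fun _ ↦ Real.exp_pos _) ?_
        simpa using sum_gaussianWeight_le_one c hv (univ.image X)
    _ = -(∫ ω, Real.log (gaussianWeight c v (X ω)) ∂μ) / Real.log 2 := by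
        simp only [Real.logb, ← mul_div_assoc, ← sum_div, sum_eq_integral, neg_div]
    _ = 1 / 2 * Real.logb 2 (2 * Real.pi * Real.exp 1 * v) := by
        rw [mean_log_weight, Real.logb]
        ring

end Gaussian

section Variance

variable {Ω : Type*} [MeasurableSpace Ω] {μ : Measure Ω}

lemma variance_sum_le_of_covariance_nonpos {ι : Type*} [IsFiniteMeasure μ] [Fintype ι]
    {X : ι → Ω → ℝ} (hX : ∀ i, MemLp (X i) 2 μ)
    (hcov : Pairwise fun i j ↦ cov[X i, X j; μ] ≤ 0) :
    Var[∑ i, X i; μ] ≤ ∑ i, Var[X i; μ] := by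
  classical
  rw [variance_sum hX]
  gcongr with i
  rw [← covariance_self (hX i).aemeasurable, ← add_sum_erase _ _ (mem_univ i)]
  exact add_le_of_nonpos_right <| sum_nonpos fun j hj ↦ hcov (ne_of_mem_erase hj).symm

variable [IsProbabilityMeasure μ] {A B : Set Ω}

lemma covariance_indicator_one (hA : MeasurableSet A) (hB : MeasurableSet B) :
    cov[A.indicator 1, B.indicator 1; μ] = μ.real (A ∩ B) - μ.real A * μ.real B := by
  have memLp_one : MemLp (1 : Ω → ℝ) 2 μ := memLp_const 1
  rw [covariance_eq_sub (memLp_one.indicator hA) (memLp_one.indicator hB),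
    ← Set.inter_indicator_one, integral_indicator_one (hA.inter hB), integral_indicator_one hA,
    integral_indicator_one hB]

lemma variance_indicator_one_le (hA : MeasurableSet A) :
    Var[A.indicator 1; μ] ≤ 1 / 4 := by
  calc Var[A.indicator 1; μ]
      ≤ ((1 - 0) / 2) ^ 2 := variance_le_sq_of_bounded
        (ae_of_all _ fun ω ↦
          ⟨Set.indicator_nonneg (by simp) ω, Set.indicator_le_self' (by simp) ω⟩)
        (measurable_one.indicator hA).aemeasurable
    _ = 1 / 4 := by norm_num

lemma measureReal_compl_inter_compl_le_mul (hA : MeasurableSet A) (hB : MeasurableSet B)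
    (hAB : Disjoint A B) : μ.real (Aᶜ ∩ Bᶜ) ≤ μ.real Aᶜ * μ.real Bᶜ := by
  rw [← Set.compl_union, probReal_compl_eq_one_sub (hA.union hB), probReal_compl_eq_one_sub hA,
    probReal_compl_eq_one_sub hB, measureReal_union hAB hB]
  linarith [mul_nonneg (measureReal_nonneg : 0 ≤ μ.real A) (measureReal_nonneg : 0 ≤ μ.real B)]

end Variance

section Occupancy

variable {Ω ι V : Type*}

/-- The event that none of the random vertices `f i` equals `v`; for a random orientation, that
`v` has in-degree zero. -/
def vacant (f : ι → Ω → V) (v : V) : Set Ω := {ω | ∀ i, f i ω ≠ v}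

lemma vacant_eq_iInter (f : ι → Ω → V) (v : V) : vacant f v = ⋂ i, f i ⁻¹' {v}ᶜ := by
  ext ω
  simp [vacant]

lemma card_occupied_eq_sub_sum_vacant [Fintype ι] [Fintype V] [DecidableEq V]
    (f : ι → Ω → V) (ω : Ω) :
    (#{v | ∃ i, f i ω = v} : ℝ) = Fintype.card V - (∑ v, (vacant f v).indicator 1) ω := by
  classical
  have sum_vacant :
      (∑ v, (vacant f v).indicator (1 : Ω → ℝ)) ω = (#{v | ¬ ∃ i, f i ω = v} : ℝ) := by
    simp [Finset.sum_apply, Set.indicator_apply, vacant]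
  rw [sum_vacant, eq_sub_iff_add_eq]
  exact_mod_cast card_filter_add_card_filter_not (s := (univ : Finset V)) fun v ↦ ∃ i, f i ω = v

variable [MeasurableSpace Ω] {μ : Measure Ω} [MeasurableSpace V] {f : ι → Ω → V}

lemma measureReal_iInter_preimage [Fintype ι] (hf : iIndepFun f μ) {s : Set V}
    (hs : MeasurableSet s) : μ.real (⋂ i, f i ⁻¹' s) = ∏ i, μ.real (f i ⁻¹' s) := by
  simp only [measureReal_def, ← ENNReal.toReal_prod]
  rw [hf.meas_iInter fun i ↦ ⟨s, hs, rfl⟩]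

variable [MeasurableSingletonClass V]

lemma measurableSet_vacant [Countable ι] (hfm : ∀ i, Measurable (f i)) (v : V) :
    MeasurableSet (vacant f v) := by
  rw [vacant_eq_iInter]
  exact .iInter fun i ↦ hfm i (measurableSet_singleton v).compl

lemma measureReal_vacant_inter_vacant_le_mul [Finite ι] (hf : iIndepFun f μ)
    (hfm : ∀ i, Measurable (f i)) {u v : V} (huv : u ≠ v) :
    μ.real (vacant f u ∩ vacant f v) ≤ μ.real (vacant f u) * μ.real (vacant f v) := by
  have := Fintype.ofFinite ι
  have := hf.isProbabilityMeasure
  have hu := measurableSet_singleton u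
  have hv := measurableSet_singleton v
  simp only [vacant_eq_iInter, ← Set.iInter_inter_distrib, ← Set.preimage_inter]
  rw [measureReal_iInter_preimage hf (hu.compl.inter hv.compl),
    measureReal_iInter_preimage hf hu.compl, measureReal_iInter_preimage hf hv.compl,
    ← prod_mul_distrib]
  exact prod_le_prod (fun _ _ ↦ measureReal_nonneg) fun i _ ↦
    measureReal_compl_inter_compl_le_mul (hfm i hu) (hfm i hv)
      ((Set.disjoint_singleton.mpr huv).preimage _)

theorem variance_card_occupied_le [Fintype ι] [Fintype V] [DecidableEq V] (hf : iIndepFun f μ)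
    (hfm : ∀ i, Measurable (f i)) :
    Var[fun ω ↦ (#{v | ∃ i, f i ω = v} : ℝ); μ] ≤ Fintype.card V / 4 := by
  have := hf.isProbabilityMeasure
  have hvac := measurableSet_vacant hfm
  have memLp_vacant (v : V) : MemLp ((vacant f v).indicator (1 : Ω → ℝ)) 2 μ :=
    (memLp_const 1).indicator (hvac v)
  have negatively_correlated :
      Pairwise fun u v ↦ cov[(vacant f u).indicator 1, (vacant f v).indicator 1; μ] ≤ 0 := by
    intro u v huv
    rw [covariance_indicator_one (hvac u) (hvac v)]
    exact sub_nonpos.mpr (measureReal_vacant_inter_vacant_le_mul hf hfm huv)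
  calc Var[fun ω ↦ (#{v | ∃ i, f i ω = v} : ℝ); μ]
      = Var[∑ v, (vacant f v).indicator (1 : Ω → ℝ); μ] := by
        simp only [card_occupied_eq_sub_sum_vacant]
        rw [variance_const_sub (memLp_finsetSum' _ fun v _ ↦ memLp_vacant v).1]
    _ ≤ ∑ v, Var[(vacant f v).indicator (1 : Ω → ℝ); μ] :=
        variance_sum_le_of_covariance_nonpos memLp_vacant negatively_correlated
    _ ≤ ∑ _v : V, 1 / 4 := sum_le_sum fun v _ ↦ variance_indicator_one_le (hvac v)
    _ = Fintype.card V / 4 := by simp [div_eq_mul_inv]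

end Occupancy

section Orientation

lemma iIndepFun_map_of_comp {Ω Ω' ι : Type*} [Finite ι] {β : ι → Type*} [MeasurableSpace Ω]
    [MeasurableSpace Ω'] [∀ i, MeasurableSpace (β i)] {μ : Measure Ω} {φ : Ω → Ω'}
    {f : ∀ i, Ω' → β i} (hφ : Measurable φ) (hf : ∀ i, Measurable (f i))
    (h : iIndepFun (fun i ↦ f i ∘ φ) μ) : iIndepFun f (μ.map φ) := by
  have := Fintype.ofFinite ι
  have := h.isProbabilityMeasure
  have := Measure.isProbabilityMeasure_map (μ := μ) hφ.aemeasurable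
  rw [iIndepFun_iff_map_fun_eq_pi_map fun i ↦ (hf i).aemeasurable]
  simp only [Measure.map_map (measurable_pi_lambda _ hf) hφ, Measure.map_map (hf _) hφ]
  exact h.map_fun_eq_pi_map fun i ↦ ((hf i).comp hφ).aemeasurable

variable {ι V : Type*} [Fintype ι] [MeasurableSpace V]

/-- The law of a random orientation: each edge `E i` independently picks a uniform vertex. -/
noncomputable def orientationMeasure (E : ι → Finset V) :
    Measure {f : ι → V // ∀ i, f i ∈ E i} :=
  (Measure.pi fun i ↦ uniformOn (Set.univ : Set (E i))).map MeasurableEquiv.subtypePiEquivPi.symm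

lemma orientationMeasure_real_singleton [MeasurableSingletonClass V] (E : ι → Finset V)
    (ω : {f : ι → V // ∀ i, f i ∈ E i}) :
    (orientationMeasure E).real {ω} = ∏ i, (#(E i) : ℝ)⁻¹ := by
  rw [orientationMeasure, measureReal_def, MeasurableEquiv.map_apply,
    ← MeasurableEquiv.image_eq_preimage_symm, Set.image_singleton, Measure.pi_singleton]
  simp [uniformOn_univ]

lemma iIndepFun_orientationMeasure (E : ι → Finset V) [∀ i, Nonempty (E i)] :
    iIndepFun (fun i ω ↦ ω.1 i) (orientationMeasure E) :=
  iIndepFun_map_of_comp (MeasurableEquiv.measurable _)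
    (fun i ↦ (measurable_pi_apply i).comp measurable_subtype_coe)
    (iIndepFun_pi (X := fun i (x : E i) ↦ x.1) fun i ↦ by fun_prop)

end Orientation

theorem entropy_nonzero_indegree_le_general {Ω ι V : Type*} [Fintype Ω] [MeasurableSpace Ω]
    [MeasurableSingletonClass Ω] {μ : Measure Ω} [Fintype ι] [Fintype V] [Nonempty V]
    [DecidableEq V] [MeasurableSpace V] [MeasurableSingletonClass V] {f : ι → Ω → V}
    (hf : iIndepFun f μ) :
    shannonEntropy (fun ω ↦ μ.real {ω}) (fun ω ↦ #{v | ∃ i, f i ω = v}) ≤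
      1 / 2 * Real.logb 2 (Fintype.card V) + 1 / 2 * Real.logb 2 (Real.pi * Real.exp 1) := by
  have := hf.isProbabilityMeasure
  set X : Ω → ℕ := fun ω ↦ #{v | ∃ i, f i ω = v}
  have variance_le := variance_card_occupied_le hf fun i ↦ measurable_of_finite (f i)
  have one_le_card : (1 : ℝ) ≤ Fintype.card V := by exact_mod_cast Fintype.card_pos
  calc shannonEntropy (fun ω ↦ μ.real {ω}) X
      = shannonEntropy (fun ω ↦ μ.real {ω}) (Nat.cast ∘ X : Ω → ℤ) :=
        (shannonEntropy_comp_of_injective _ X Nat.cast_injective).symm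
    _ ≤ 1 / 2 * Real.logb 2
          (2 * Real.pi * Real.exp 1 * (Var[fun ω ↦ (X ω : ℝ); μ] + 1 / 12)) := by
        simpa using shannonEntropy_le_half_logb_variance μ (Nat.cast ∘ X)
    _ ≤ 1 / 2 * Real.logb 2 (Fintype.card V * (Real.pi * Real.exp 1)) := by
        have := variance_nonneg (fun ω ↦ (X ω : ℝ)) μ
        gcongr _ * Real.logb 2 ?_
        · norm_num
        · calc 2 * Real.pi * Real.exp 1 * (Var[fun ω ↦ (X ω : ℝ); μ] + 1 / 12)
              ≤ 2 * Real.pi * Real.exp 1 * (Fintype.card V / 2) := by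
                gcongr
                linarith
            _ = Fintype.card V * (Real.pi * Real.exp 1) := by ring
    _ = _ := by rw [Real.logb_mul (by positivity) (by positivity), mul_add]

/-- Let `H` be an `r`-uniform multi-hypergraph with `n` vertices and edges
`E 0, …, E (m-1)` (each an `r`-element subset of `V`, `r ≥ 2`).  A random orientation
assigns to each edge, independently and uniformly, one of its `r` vertices; thus each
orientation `f` (an element of the subtype `{f : Fin m → V // ∀ i, f i ∈ E i}`) has
probability `1 / r ^ m`.  If `X_H` is the number of vertices with nonzero in-degree,
then `H(X_H) ≤ (1/2) log₂ n + (1/2) log₂ (π e)`. -/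
theorem entropy_nonzero_indegree_le {V : Type*} [Fintype V] [DecidableEq V]
    (n m r : ℕ) (hn : 0 < n) (hm : 0 < m) (hr : 2 ≤ r)
    (hV : Fintype.card V = n)
    (E : Fin m → Finset V) (hE : ∀ i, (E i).card = r) :
    shannonEntropy
        (fun _ : {f : Fin m → V // ∀ i, f i ∈ E i} => (1 : ℝ) / r ^ m)
        (fun f => (Finset.univ.filter fun v => ∃ i, f.1 i = v).card) ≤
      (1 / 2) * Real.logb 2 n + (1 / 2) * Real.logb 2 (Real.pi * Real.exp 1) := by
  let _ : MeasurableSpace V := ⊤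
  have : Nonempty V := Fintype.card_pos_iff.mp (hV ▸ hn)
  have (i : Fin m) : Nonempty (E i) := (card_pos.mp (by rw [hE]; omega)).to_subtype
  simpa [orientationMeasure_real_singleton, hE, hV] using
    entropy_nonzero_indegree_le_general (iIndepFun_orientationMeasure E)
end

section
/- Let C_n be the cycle on n ≥ 3 vertices and let X_{C_n} be the number of vertices with nonzero in-degree after a random orientation of the edges of C_n. Then H(X_{C_n}) ≥ (1/2)·log₂(n) + (1/2)·log₂(πe) − 3/2 − 1/(2·ln(2)·(n−1)). -/
open Finset

/-!
The entropy of `X` is at least `-E[log₂ q(X)]` whenever `q` dominates the law of `X`. Going round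
the cycle, vertices of in-degree `0` and `2` alternate. Calling both kinds turning points, their
number `D` is `2 (n - X)`, so `X` and `D` have the same entropy. Every set of turning points comes
from at most two orientations, so `P(D = j) ≤ 2 C(n, j) / 2ⁿ`, and the binomial coefficient has
the Gaussian bound `log C(n, j) ≤ n log 2 - log (π n / 2) / 2 - (2 j - n)² / (2 (n + 1))`.
Averaging it needs only `E[(2 D - n)²] = n`, which holds because the indicators of the turning
points are pairwise independent fair coins.
-/

section Binomial

theorem two_mul_sub_div_add_le_log_sub_log {a b : ℝ} (ha : 0 < a) (hab : a ≤ b) :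
    2 * (b - a) / (a + b) ≤ Real.log b - Real.log a := by
  have h := Real.le_log_one_add_of_nonneg (div_nonneg (sub_nonneg.2 hab) ha.le)
  have hratio : 1 + (b - a) / a = b / a := by field_simp; ring
  have hdenom : (b - a) / a + 2 = (a + b) / a := by field_simp; ring
  rwa [hratio, hdenom, ← mul_div_assoc, div_div_div_cancel_right₀ ha.ne',
    Real.log_div (ha.trans_le hab).ne' ha.ne'] at h

theorem wallis_eq_centralBinom (k : ℕ) :
    Real.Wallis.W k = 2 ^ (4 * k) / ((k.centralBinom : ℝ) ^ 2 * (2 * k + 1)) := by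
  have hfact : ((2 * k).factorial : ℝ) = k.centralBinom * (k.factorial : ℝ) ^ 2 := by
    have h := Nat.choose_mul_factorial_mul_factorial (show k ≤ 2 * k by omega)
    rw [show 2 * k - k = k by omega, ← Nat.centralBinom_eq_two_mul_choose] at h
    rw [← h]
    push_cast
    ring
  rw [Real.Wallis.W_eq_factorial_ratio, hfact]
  field_simp

theorem centralBinom_sq_mul_pi_mul_le (k : ℕ) :
    (k.centralBinom : ℝ) ^ 2 * (Real.pi * k) ≤ 2 ^ (4 * k) := by
  have hwallis := Real.Wallis.le_W k
  have hc : (0 : ℝ) < k.centralBinom := by exact_mod_cast k.centralBinom_pos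
  have hk : (k : ℝ) ≤ (2 * k + 1) ^ 2 / (4 * (k + 1)) := by
    rw [le_div_iff₀ (by positivity)]
    nlinarith
  rw [wallis_eq_centralBinom, le_div_iff₀ (by positivity)] at hwallis
  calc (k.centralBinom : ℝ) ^ 2 * (Real.pi * k)
      ≤ k.centralBinom ^ 2 * (Real.pi * ((2 * k + 1) ^ 2 / (4 * (k + 1)))) := by gcongr
    _ = (2 * k + 1) / (2 * k + 2) * (Real.pi / 2) * (k.centralBinom ^ 2 * (2 * k + 1)) := by
      field_simp
      ring
    _ ≤ 2 ^ (4 * k) := hwallis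

theorem log_centralBinom_le {k : ℕ} (hk : k ≠ 0) :
    Real.log k.centralBinom ≤ 2 * k * Real.log 2 - Real.log (Real.pi * k) / 2 := by
  have hc : (0 : ℝ) < k.centralBinom := by exact_mod_cast k.centralBinom_pos
  have h := Real.log_le_log (by positivity) (centralBinom_sq_mul_pi_mul_le k)
  rw [Real.log_mul (by positivity) (by positivity), Real.log_pow, Real.log_pow] at h
  push_cast at h
  linarith

/-- `log C(n, j)` with its expected Gaussian decay added back. The denominator `2 (n + 1)`, rather
than `2 n`, is what makes it monotone on either side of the centre `n / 2`. -/
noncomputable def flattenedLogChoose (n j : ℕ) : ℝ :=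
  Real.log (n.choose j) + (2 * (j : ℝ) - n) ^ 2 / (2 * (n + 1))

theorem flattenedLogChoose_symm {n j : ℕ} (hj : j ≤ n) :
    flattenedLogChoose n (n - j) = flattenedLogChoose n j := by
  rw [flattenedLogChoose, flattenedLogChoose, Nat.choose_symm hj, Nat.cast_sub hj]
  ring

theorem flattenedLogChoose_succ_le {n j : ℕ} (hj : n ≤ 2 * j) (hjn : j < n) :
    flattenedLogChoose n (j + 1) ≤ flattenedLogChoose n j := by
  have hj' : (n : ℝ) ≤ 2 * j := by exact_mod_cast hj
  have hjn' : (0 : ℝ) < n - j := sub_pos.2 (by exact_mod_cast hjn)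
  have hc : (n.choose j : ℝ) ≠ 0 := by exact_mod_cast (Nat.choose_pos hjn.le).ne'
  have hc' : (n.choose (j + 1) : ℝ) ≠ 0 := by exact_mod_cast (Nat.choose_pos hjn).ne'
  have hratio : Real.log (n.choose (j + 1)) + Real.log (j + 1) =
      Real.log (n.choose j) + Real.log (n - j) := by
    rw [← Real.log_mul hc' (by positivity), ← Real.log_mul hc hjn'.ne', ← Nat.cast_sub hjn.le]
    exact_mod_cast congrArg (fun m : ℕ => Real.log m) (Nat.choose_succ_right_eq n j)
  have hlog := two_mul_sub_div_add_le_log_sub_log hjn' (by linarith : (n - j : ℝ) ≤ j + 1)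
  have hsq : (2 * ((j + 1 : ℕ) : ℝ) - n) ^ 2 / (2 * (n + 1)) =
      (2 * (j : ℝ) - n) ^ 2 / (2 * (n + 1)) + 2 * ((j + 1) - (n - j)) / ((n - j) + (j + 1)) := by
    rw [show (n - j : ℝ) + (j + 1) = n + 1 by ring]
    push_cast
    field_simp
    ring
  rw [flattenedLogChoose, flattenedLogChoose, hsq]
  linarith

theorem flattenedLogChoose_le_of_le {n i j : ℕ} (hi : n ≤ 2 * i) (hij : i ≤ j) (hj : j ≤ n) :
    flattenedLogChoose n j ≤ flattenedLogChoose n i := by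
  induction j, hij using Nat.le_induction with
  | base => rfl
  | succ j hij ih => exact (flattenedLogChoose_succ_le (by omega) hj).trans (ih (by omega))

theorem flattenedLogChoose_even_center_le {m : ℕ} (hm : m ≠ 0) :
    flattenedLogChoose (2 * m) m ≤
      (2 * m : ℕ) * Real.log 2 - Real.log (Real.pi * (2 * m : ℕ) / 2) / 2 := by
  have h := log_centralBinom_le hm
  rw [flattenedLogChoose, ← Nat.centralBinom_eq_two_mul_choose]
  push_cast
  rw [show Real.pi * (2 * (m : ℝ)) / 2 = Real.pi * m by ring]
  simpa using h

theorem centralBinom_succ_eq_two_mul_choose (m : ℕ) :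
    (m + 1).centralBinom = 2 * (2 * m + 1).choose (m + 1) := by
  rw [Nat.centralBinom_eq_two_mul_choose, show 2 * (m + 1) = 2 * m + 1 + 1 by ring,
    Nat.choose_succ_succ, ← Nat.choose_symm_half]
  ring

theorem flattenedLogChoose_odd_center_le (m : ℕ) :
    flattenedLogChoose (2 * m + 1) (m + 1) ≤
      (2 * m + 1 : ℕ) * Real.log 2 - Real.log (Real.pi * (2 * m + 1 : ℕ) / 2) / 2 := by
  have hc : ((2 * m + 1).choose (m + 1) : ℝ) ≠ 0 := by
    exact_mod_cast (Nat.choose_pos (by omega)).ne'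
  have hcentral := log_centralBinom_le m.succ_ne_zero
  rw [Nat.succ_eq_add_one, centralBinom_succ_eq_two_mul_choose, Nat.cast_mul,
    Real.log_mul (by norm_num) hc] at hcentral
  have hlog := Real.one_sub_inv_le_log_of_pos
    (x := Real.pi * (m + 1) / (Real.pi * (2 * m + 1) / 2)) (by positivity)
  rw [Real.log_div (by positivity) (by positivity)] at hlog
  have hdefect : (2 * ((m : ℝ) + 1) - (2 * m + 1)) ^ 2 / (2 * (2 * m + 1 + 1)) =
      (1 - (Real.pi * ((m : ℝ) + 1) / (Real.pi * (2 * m + 1) / 2))⁻¹) / 2 := by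
    field_simp
    ring
  rw [flattenedLogChoose]
  push_cast at hcentral ⊢
  rw [hdefect]
  linarith

theorem flattenedLogChoose_le {n j : ℕ} (hn : n ≠ 0) (hj : j ≤ n) :
    flattenedLogChoose n j ≤ n * Real.log 2 - Real.log (Real.pi * n / 2) / 2 := by
  wlog hhalf : n ≤ 2 * j generalizing j
  · rw [← flattenedLogChoose_symm hj]
    exact this (by omega) (by omega)
  obtain ⟨m, rfl | rfl⟩ := n.even_or_odd'
  · exact (flattenedLogChoose_le_of_le le_rfl (by omega) hj).trans
      (flattenedLogChoose_even_center_le (by omega))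
  · exact (flattenedLogChoose_le_of_le (by omega) (by omega) hj).trans
      (flattenedLogChoose_odd_center_le m)

theorem logb_le_of_le_mul_choose {n j : ℕ} (hn : n ≠ 0) {x C : ℝ} (hx : 0 < x) (hC : 0 < C)
    (h : x ≤ C * (n.choose j / 2 ^ n)) :
    Real.logb 2 x ≤ Real.logb 2 C - Real.logb 2 (Real.pi * n / 2) / 2 -
      (2 * (j : ℝ) - n) ^ 2 / (2 * (n + 1) * Real.log 2) := by
  have hlog2 : 0 < Real.log 2 := Real.log_pos one_lt_two
  have hchoose : n.choose j ≠ 0 := fun h0 => by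
    simp only [h0, Nat.cast_zero, zero_div, mul_zero] at h
    exact h.not_gt hx
  have hflat := flattenedLogChoose_le hn (Nat.choose_ne_zero_iff.1 hchoose)
  have hlog := Real.log_le_log hx h
  have hchoose' : (n.choose j : ℝ) ≠ 0 := by exact_mod_cast hchoose
  rw [Real.log_mul hC.ne' (by positivity), Real.log_div hchoose' (by positivity),
    Real.log_pow] at hlog
  rw [flattenedLogChoose] at hflat
  calc Real.logb 2 x
      ≤ (Real.log C - Real.log (Real.pi * n / 2) / 2 -
          (2 * (j : ℝ) - n) ^ 2 / (2 * (n + 1))) / Real.log 2 :=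
        div_le_div_of_nonneg_right (by linarith) hlog2.le
    _ = _ := by
        unfold Real.logb
        field_simp

end Binomial

section Entropy

variable {Ω Ω' S S' : Type*} [Fintype Ω] [Fintype Ω'] [DecidableEq S] [DecidableEq S']

theorem shannonEntropy_eq_neg_sum (p : Ω → ℝ) (X : Ω → S) :
    shannonEntropy p X = -∑ ω, p ω * Real.logb 2 (∑ ω' with X ω' = X ω, p ω') := by
  rw [shannonEntropy, sum_image' (fun ω => p ω * Real.logb 2 (∑ ω' with X ω' = X ω, p ω'))]
  intro ω _
  rw [sum_mul]
  refine sum_congr rfl fun ω' hω' => ?_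
  rw [(mem_filter.1 hω').2]

theorem shannonEntropy_eq_of_equiv (e : Ω ≃ Ω') {p : Ω → ℝ} {p' : Ω' → ℝ} {X : Ω → S}
    {X' : Ω' → S'} (hp : ∀ ω, p' (e ω) = p ω)
    (hX : ∀ ω₁ ω₂, X' (e ω₁) = X' (e ω₂) ↔ X ω₁ = X ω₂) :
    shannonEntropy p' X' = shannonEntropy p X := by
  simp only [shannonEntropy_eq_neg_sum, sum_filter, ← e.sum_comp, hp, hX]

theorem neg_sum_mul_le_shannonEntropy {p φ : Ω → ℝ} {X : Ω → S} (hp : ∀ ω, 0 ≤ p ω)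
    (hφ : ∀ ω, 0 < p ω → Real.logb 2 (∑ ω' with X ω' = X ω, p ω') ≤ φ ω) :
    -∑ ω, p ω * φ ω ≤ shannonEntropy p X := by
  rw [shannonEntropy_eq_neg_sum, neg_le_neg_iff]
  refine sum_le_sum fun ω _ => ?_
  rcases (hp ω).eq_or_lt with hω | hω
  · simp [← hω]
  · exact mul_le_mul_of_nonneg_left (hφ ω hω) hω.le

theorem le_shannonEntropy_of_prob_le_mul_choose {n : ℕ} (hn : n ≠ 0) {C : ℝ} (hC : 0 < C)
    {p : Ω → ℝ} {Y : Ω → ℕ} (hp : ∀ ω, 0 ≤ p ω) (hp_sum : ∑ ω, p ω = 1)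
    (hY : ∀ j, ∑ ω with Y ω = j, p ω ≤ C * (n.choose j / 2 ^ n)) :
    Real.logb 2 (Real.pi * n / 2) / 2 - Real.logb 2 C +
      (∑ ω, p ω * (2 * (Y ω : ℝ) - n) ^ 2) / (2 * (n + 1) * Real.log 2) ≤ shannonEntropy p Y := by
  have hlogb : ∀ ω, 0 < p ω → Real.logb 2 (∑ ω' with Y ω' = Y ω, p ω') ≤
      Real.logb 2 C - Real.logb 2 (Real.pi * n / 2) / 2 -
        (2 * (Y ω : ℝ) - n) ^ 2 / (2 * (n + 1) * Real.log 2) := fun ω hω =>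
    logb_le_of_le_mul_choose hn
      (hω.trans_le (single_le_sum (fun ω' _ => hp ω') (by simp))) hC (hY (Y ω))
  refine le_of_eq_of_le ?_ (neg_sum_mul_le_shannonEntropy hp hlogb)
  simp only [mul_sub, sum_sub_distrib, ← sum_mul, hp_sum, ← mul_div_assoc, ← sum_div]
  ring

end Entropy

section TurningPoints

/-- The positions at which the cyclic Boolean word `b` changes value. When `b i` says that the edge
`{i, i + 1}` points to `i + 1`, these are the vertices of in-degree `0` or `2`. -/
def turningPoints {n : ℕ} [NeZero n] (b : ZMod n → Bool) : Finset (ZMod n) :=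
  univ.filter fun v => b (v - 1) ≠ b v

/-- The indicator of `v` being a turning point of `b`, recentred to take values in `{1, -1}`. -/
def turnSign {n : ℕ} (b : ZMod n → Bool) (v : ZMod n) : ℝ :=
  if b (v - 1) ≠ b v then 1 else -1

variable {n : ℕ}

theorem turnSign_mul_self (b : ZMod n → Bool) (v : ZMod n) : turnSign b v * turnSign b v = 1 := by
  unfold turnSign
  split_ifs <;> norm_num

/-- Negation of the `i`-th letter of a Boolean word, as a permutation of the words. It is used to
cancel sums over all words in pairs. -/
def flipAt {ι : Type*} [DecidableEq ι] (i : ι) : Equiv.Perm (ι → Bool) :=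
  Function.Involutive.toPerm (fun b => Function.update b i (!b i)) fun b => by simp

theorem flipAt_apply {ι : Type*} [DecidableEq ι] (i : ι) (b : ι → Bool) :
    flipAt i b = Function.update b i (!b i) := rfl

theorem turnSign_flipAt_self [Fact (1 < n)] (b : ZMod n → Bool) (v : ZMod n) :
    turnSign (flipAt v b) v = -turnSign b v := by
  cases h : b (v - 1) <;> cases h' : b v <;> simp [turnSign, flipAt_apply, h, h']

theorem turnSign_flipAt_of_ne {i v : ZMod n} (hv : v ≠ i) (hv' : v - 1 ≠ i) (b : ZMod n → Bool) :
    turnSign (flipAt i b) v = turnSign b v := by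
  simp [turnSign, flipAt_apply, hv, hv']

theorem sum_turnSign_mul_turnSign_of_ne [NeZero n] (hn : 3 ≤ n) {u v : ZMod n} (huv : u ≠ v) :
    ∑ b, turnSign b u * turnSign b v = 0 := by
  have : Fact (1 < n) := ⟨by omega⟩
  have htwo : (2 : ZMod n) ≠ 0 := fun h =>
    absurd (Nat.le_of_dvd two_pos ((ZMod.natCast_eq_zero_iff 2 n).1 (by exact_mod_cast h)))
      (by omega)
  -- Flipping `b v` negates the signs at `v` and `v + 1` only, so it negates the product unless
  -- `u = v + 1`; the two vertices then exchange roles, as `v = u + 1` too would force `2 = 0`.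
  wlog hne : u - 1 ≠ v generalizing u v
  · have hne' : v - 1 ≠ u := fun h => htwo (by linear_combination -not_not.1 hne - h)
    simpa only [mul_comm] using this huv.symm hne'
  have hflip (b : ZMod n → Bool) : turnSign (flipAt v b) u * turnSign (flipAt v b) v =
      -(turnSign b u * turnSign b v) := by
    rw [turnSign_flipAt_self, turnSign_flipAt_of_ne huv hne, mul_neg]
  have hsum := Equiv.sum_comp (flipAt v) fun b => turnSign b u * turnSign b v
  simp only [hflip, sum_neg_distrib] at hsum
  linarith

theorem sum_sq_sum_turnSign [NeZero n] (hn : 3 ≤ n) :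
    ∑ b : ZMod n → Bool, (∑ v, turnSign b v) ^ 2 = n * 2 ^ n := by
  have horth (u v : ZMod n) :
      ∑ b, turnSign b u * turnSign b v = if u = v then (2 : ℝ) ^ n else 0 := by
    split_ifs with h
    · simp [h, turnSign_mul_self, ZMod.card]
    · exact sum_turnSign_mul_turnSign_of_ne hn h
  calc ∑ b : ZMod n → Bool, (∑ v, turnSign b v) ^ 2
      = ∑ u, ∑ v, ∑ b : ZMod n → Bool, turnSign b u * turnSign b v := by
        simp only [sq, sum_mul_sum]
        rw [sum_comm]
        exact sum_congr rfl fun u _ => sum_comm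
    _ = n * 2 ^ n := by simp [horth, ZMod.card]

variable [NeZero n]

theorem sum_turnSign (b : ZMod n → Bool) :
    ∑ v, turnSign b v = 2 * (#(turningPoints b) : ℝ) - n := by
  have hsign (v : ZMod n) : turnSign b v = 2 * (if b (v - 1) ≠ b v then 1 else 0) - 1 := by
    unfold turnSign
    split_ifs <;> norm_num
  simp only [hsign, sum_sub_distrib, ← mul_sum, turningPoints, card_filter]
  simp [ZMod.card]

theorem eq_of_turningPoints_eq {b b' : ZMod n → Bool} (h0 : b 0 = b' 0)
    (h : turningPoints b = turningPoints b') : b = b' := by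
  have hnat (k : ℕ) : b k = b' k := by
    induction k with
    | zero => simpa using h0
    | succ k ih =>
      have hk := Finset.ext_iff.1 h ((k + 1 : ℕ) : ZMod n)
      simp only [turningPoints, mem_filter, mem_univ, true_and, Nat.cast_add, Nat.cast_one,
        add_sub_cancel_right, ih] at hk
      push_cast
      cases hb : b (k + 1) <;> cases hb' : b' (k + 1) <;> simp_all
  funext i
  simpa using hnat i.val

theorem card_turningPoints_fiber_le (j : ℕ) :
    #{b : ZMod n → Bool | #(turningPoints b) = j} ≤ 2 * n.choose j := by
  have h : #{b : ZMod n → Bool | #(turningPoints b) = j} ≤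
      #((univ : Finset Bool) ×ˢ powersetCard j (univ : Finset (ZMod n))) := by
    refine card_le_card_of_injOn (fun b => (b 0, turningPoints b)) ?_ ?_
    · intro b hb
      simpa [mem_powersetCard] using hb
    · intro b _ b' _ hbb'
      exact eq_of_turningPoints_eq (congrArg Prod.fst hbb') (congrArg Prod.snd hbb')
  simpa [card_product, ZMod.card] using h

theorem le_shannonEntropy_card_turningPoints (hn : 3 ≤ n) :
    Real.logb 2 (Real.pi * n / 2) / 2 - 1 + n / (2 * (n + 1) * Real.log 2) ≤
      shannonEntropy (fun _ : ZMod n → Bool => (1 : ℝ) / 2 ^ n) fun b => #(turningPoints b) := by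
  have hsum : ∑ _b : ZMod n → Bool, (1 : ℝ) / 2 ^ n = 1 := by simp [ZMod.card]
  have hmoment : ∑ b : ZMod n → Bool, (1 : ℝ) / 2 ^ n * (2 * (#(turningPoints b) : ℝ) - n) ^ 2 =
      (n : ℝ) := by
    rw [← mul_sum]
    simp only [← sum_turnSign]
    rw [sum_sq_sum_turnSign hn]
    field_simp
  have hfiber (j : ℕ) : ∑ b : ZMod n → Bool with #(turningPoints b) = j, (1 : ℝ) / 2 ^ n ≤
      2 * (n.choose j / 2 ^ n) := by
    rw [sum_const, nsmul_eq_mul, mul_one_div, ← mul_div_assoc]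
    refine div_le_div_of_nonneg_right ?_ (by positivity)
    exact_mod_cast card_turningPoints_fiber_le j
  have h := le_shannonEntropy_of_prob_le_mul_choose (NeZero.ne n) two_pos
    (fun _ => by positivity) hsum hfiber
  rwa [hmoment, Real.logb_self_eq_one one_lt_two] at h

end TurningPoints

section Orientation

/-- Orientations of the cycle on `ZMod n`, sending the edge `{i, i + 1}`, indexed by `i`, to its
head. -/
abbrev CycleOrientation (n : ℕ) : Type :=
  {g : ZMod n → ZMod n // ∀ i, g i = i ∨ g i = i + 1}

variable {n : ℕ} [Fact (1 < n)]

/-- Boolean words encode orientations: the edge `{i, i + 1}` points to `i + 1` when `b i` holds. -/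
def orientationEquiv : (ZMod n → Bool) ≃ CycleOrientation n where
  toFun b := ⟨fun i => if b i then i + 1 else i, fun i => by cases b i <;> simp⟩
  invFun g i := decide (g.1 i = i + 1)
  left_inv b := by
    funext i
    cases h : b i <;> simp [h]
  right_inv g := by
    ext i
    rcases g.2 i with h | h <;> simp [h]

theorem exists_orientationEquiv_eq_iff (b : ZMod n → Bool) (v : ZMod n) :
    (∃ i, (orientationEquiv b).1 i = v) ↔ b (v - 1) = true ∨ b v = false := by
  constructor
  · rintro ⟨i, rfl⟩
    cases h : b i <;> simp [orientationEquiv, h]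
  · rintro (h | h)
    · exact ⟨v - 1, by simp [orientationEquiv, h]⟩
    · exact ⟨v, by simp [orientationEquiv, h]⟩

theorem two_mul_card_heads_add_card_turningPoints [NeZero n] (b : ZMod n → Bool) :
    2 * #{v | ∃ i, (orientationEquiv b).1 i = v} + #(turningPoints b) = 2 * n := by
  have hshift : ∑ v, (b (v - 1)).toNat = ∑ v, (b v).toNat :=
    (Equiv.subRight (1 : ZMod n)).sum_comp fun v => (b v).toNat
  have hlocal (v : ZMod n) : 2 * (if b (v - 1) = true ∨ b v = false then 1 else 0) +
      (if b (v - 1) ≠ b v then 1 else 0) + (b v).toNat = 2 + (b (v - 1)).toNat := by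
    cases b (v - 1) <;> cases b v <;> rfl
  have hsum := sum_congr (rfl : (univ : Finset (ZMod n)) = univ) fun v _ => hlocal v
  simp only [sum_add_distrib, ← mul_sum, ← card_filter, hshift, sum_const, card_univ,
    ZMod.card, smul_eq_mul] at hsum
  simp only [exists_orientationEquiv_eq_iff, turningPoints]
  omega

theorem shannonEntropy_card_heads [NeZero n] :
    shannonEntropy (fun _ : CycleOrientation n => (1 : ℝ) / 2 ^ n)
        (fun g => #{v : ZMod n | ∃ i, g.1 i = v}) =
      shannonEntropy (fun _ : ZMod n → Bool => (1 : ℝ) / 2 ^ n) fun b => #(turningPoints b) := by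
  refine shannonEntropy_eq_of_equiv orientationEquiv (fun _ => rfl) fun b b' => ?_
  have hb := two_mul_card_heads_add_card_turningPoints b
  have hb' := two_mul_card_heads_add_card_turningPoints b'
  omega

end Orientation

/-- Consider the cycle `C_n` (`n ≥ 3`) with vertex set `ZMod n` and edges `{i, i+1}`.
A random orientation assigns to each edge `{i, i+1}`, independently and uniformly,
one of its two endpoints; an orientation is an element `g` of the subtype
`{g : ZMod n → ZMod n // ∀ i, g i = i ∨ g i = i + 1}`, each having probability
`1 / 2 ^ n`.  If `X_{C_n}` is the number of vertices with nonzero in-degree, then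
`H(X_{C_n}) ≥ (1/2) log₂ n + (1/2) log₂ (π e) - 3/2 - 1/(2 ln 2 (n-1))`. -/
theorem cycle_entropy_lower_bound (n : ℕ) [NeZero n] (hn : 3 ≤ n) :
    shannonEntropy
        (fun _ : {g : ZMod n → ZMod n // ∀ i, g i = i ∨ g i = i + 1} =>
          (1 : ℝ) / 2 ^ n)
        (fun g => (Finset.univ.filter fun v : ZMod n => ∃ i, g.1 i = v).card) ≥
      (1 / 2) * Real.logb 2 n + (1 / 2) * Real.logb 2 (Real.pi * Real.exp 1) -
        3 / 2 - 1 / (2 * Real.log 2 * ((n : ℝ) - 1)) := by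
  have : Fact (1 < n) := ⟨by omega⟩
  have hn' : (3 : ℝ) ≤ n := by exact_mod_cast hn
  have herror : 1 / (2 * Real.log 2 * ((n : ℝ) + 1)) ≤ 1 / (2 * Real.log 2 * ((n : ℝ) - 1)) :=
    one_div_le_one_div_of_le (mul_pos (by positivity) (by linarith)) (by gcongr; linarith)
  have hexp : Real.logb 2 (Real.exp 1) = 1 / Real.log 2 := by rw [Real.logb, Real.log_exp]
  have hmoment : (n : ℝ) / (2 * (n + 1) * Real.log 2) =
      1 / 2 * (1 / Real.log 2) - 1 / (2 * Real.log 2 * ((n : ℝ) + 1)) := by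
    field_simp
    ring
  have hentropy := le_shannonEntropy_card_turningPoints hn
  rw [← shannonEntropy_card_heads, hmoment, Real.logb_div (by positivity) two_ne_zero,
    Real.logb_mul Real.pi_ne_zero (by positivity), Real.logb_self_eq_one one_lt_two] at hentropy
  rw [Real.logb_mul Real.pi_ne_zero (Real.exp_pos 1).ne', hexp]
  linarith
end
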